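/- Let E : P_{μ₀}(ℝ^d) → ℝ ∪ {∞} be proper, coercive, lower semicontinuous, λ-convex along generalized geodesics with λ > 0, and nonnegative (E ≥ 0). Let τ > 0 satisfy λτ ≤ 1, let μ, ν ∈ D(E), and let μ_n := J_τⁿ(μ) and ν_n := J_τⁿ(ν) be the discrete gradient flow sequences obtained by n-fold application of the proximal map. Then for all n ≥ 0: Λ_τ(μ_n,ν_n)^{1/2} ≤ (1+λτ)^{−n} Λ_τ(μ,ν)^{1/2} + λτ · (6(1+λτ)/sqrt(2λ)) · sqrt(E(μ) + E(ν)). -/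

import Mathlib

/-!
The functional `Λ_τ` is contracted exactly: with `a = 1 + λτ`, each proximal step satisfies
`a² Λ_τ(μ', ν') ≤ Λ_τ(μ, ν)`, where `μ' = J_τ μ` and `ν' = J_τ ν` (`lam_step`). Iterating and taking
square roots gives the decay estimate, even without the additive error term.

Two facts yield the contraction. The first is the discrete evolution variational inequality (`evi`)
`a W₂²(μ', σ) + W₂²(μ, μ') + 2τ F(μ') ≤ W₂²(μ, σ) + 2τ F(σ)`,
obtained from minimality of `μ'` along the generalized geodesic from `μ'` to `σ` based at `μ`.
The second is a pair of slope bounds: `F(μ) - F(σ) + (λ/2) W₂²(μ, σ) ≤ |∇F|(μ) W₂(μ, σ)`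
(`slope_global`, by convexity) and `|∇F|(μ') ≤ W₂(μ, μ') / τ` (`slope_proximal`, by minimality).

Add `a` times `evi` for `μ` tested at `ν'` to `evi` for `ν` tested at `μ`, and average with the same
inequality with the roles of `μ` and `ν` exchanged. The terms in `F(μ') - F(ν')` cancel, and with
`w = W₂(μ, μ')`, `x = τ |∇F|(μ)` (and likewise for `ν`) what remains to be shown is
`x w - a w² + a² w² / 2 ≤ x² / 2`, i.e. `(x - a w) (x - (2 - a) w) ≥ 0`.
This holds because `a w ≤ x` (`step_le_slope`) and `2 - a ≤ a`.

The triangle inequality for `W₂`, needed for `slope_proximal` and to see that interpolating measures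
stay at finite distance from `μ₀`, comes from gluing couplings (`coupling_triangle`).
-/

open MeasureTheory Filter ENNReal

noncomputable section

/-- Euclidean space `ℝ^d`. -/
abbrev Euc (d : ℕ) := EuclideanSpace ℝ (Fin d)

/-- The squared 2-Wasserstein distance, as an extended nonnegative real:
the infimum over couplings `γ` (Borel probability measures on `ℝ^d × ℝ^d`
with first marginal `μ` and second marginal `ν`) of `∫ |x-y|² dγ`. -/
noncomputable def W2sq {d : ℕ} (μ ν : Measure (Euc d)) : ℝ≥0∞ :=
  ⨅ (γ : Measure (Euc d × Euc d)) (_ : γ.map Prod.fst = μ ∧ γ.map Prod.snd = ν),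
    ∫⁻ q, ENNReal.ofReal (‖q.1 - q.2‖ ^ 2) ∂γ

/-- The 2-Wasserstein distance (a real number; degenerate when `W2sq = ∞`). -/
noncomputable def W2 {d : ℕ} (μ ν : Measure (Euc d)) : ℝ :=
  Real.sqrt (W2sq μ ν).toReal

/-- `γ` is an optimal transport plan from `μ` to `ν`. -/
def IsOptimalPlan {d : ℕ} (μ ν : Measure (Euc d)) (γ : Measure (Euc d × Euc d)) : Prop :=
  γ.map Prod.fst = μ ∧ γ.map Prod.snd = ν ∧
    ∫⁻ q, ENNReal.ofReal (‖q.1 - q.2‖ ^ 2) ∂γ = W2sq μ ν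

/-- `P_{μ₀}(ℝ^d)`: Borel probability measures at finite `W₂`-distance from `μ₀`. -/
def Pfin {d : ℕ} (μ₀ : Measure (Euc d)) : Set (Measure (Euc d)) :=
  {μ | IsProbabilityMeasure μ ∧ W2sq μ₀ μ ≠ ⊤}

/-- `E` is proper: its domain inside `P_{μ₀}` is nonempty (and `E` never takes the value `-∞`,
i.e. it maps into `ℝ ∪ {∞}`). -/
def ProperFn {d : ℕ} (μ₀ : Measure (Euc d)) (F : Measure (Euc d) → EReal) : Prop :=
  (∀ ρ, F ρ ≠ ⊥) ∧ ∃ ρ ∈ Pfin μ₀, F ρ ≠ ⊤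

/-- The domain `D(E)` of `E`. -/
def Dom {d : ℕ} (μ₀ : Measure (Euc d)) (F : Measure (Euc d) → EReal) : Set (Measure (Euc d)) :=
  {μ ∈ Pfin μ₀ | F μ ≠ ⊤}

/-- `E` is coercive: for some `τ₀ > 0`,
`inf_ν { W₂²(μ₀,ν)/(2τ₀) + E(ν) } > -∞`. -/
def CoerciveFn {d : ℕ} (μ₀ : Measure (Euc d)) (F : Measure (Euc d) → EReal) : Prop :=
  ∃ τ₀ : ℝ, 0 < τ₀ ∧
    ⊥ < ⨅ ν ∈ Pfin μ₀, (((W2 μ₀ ν) ^ 2 / (2 * τ₀) : ℝ) : EReal) + F ν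

/-- `E` is sequentially lower semicontinuous with respect to `W₂`-convergence. -/
def W2LSC {d : ℕ} (μ₀ : Measure (Euc d)) (F : Measure (Euc d) → EReal) : Prop :=
  ∀ (s : ℕ → Measure (Euc d)) (μ : Measure (Euc d)),
    (∀ n, s n ∈ Pfin μ₀) → μ ∈ Pfin μ₀ →
    Tendsto (fun n => W2 (s n) μ) atTop (nhds 0) →
    F μ ≤ liminf (fun n => F (s n)) atTop

/-- `E` is `λ`-convex along generalized geodesics: for all `μ₁, μ₂, μ₃ ∈ P_{μ₀}` there
is a 3-plan whose (1,2)- and (1,3)-marginals are optimal, along whose induced interpolating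
curve the `λ`-convexity inequality (with the full transport cost `∫|x₂-x₃|² d𝛍`) holds. -/
def GenGeoConvex {d : ℕ} (μ₀ : Measure (Euc d)) (lam : ℝ)
    (F : Measure (Euc d) → EReal) : Prop :=
  ∀ μ₁ ∈ Pfin μ₀, ∀ μ₂ ∈ Pfin μ₀, ∀ μ₃ ∈ Pfin μ₀,
    ∃ pl : Measure (Euc d × Euc d × Euc d),
      IsOptimalPlan μ₁ μ₂ (pl.map (fun q => (q.1, q.2.1))) ∧
      IsOptimalPlan μ₁ μ₃ (pl.map (fun q => (q.1, q.2.2))) ∧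
      ∀ α ∈ Set.Icc (0:ℝ) 1,
        F (pl.map (fun q => (1 - α) • q.2.1 + α • q.2.2)) ≤
          ((1 - α : ℝ) : EReal) * F μ₂ + (α : EReal) * F μ₃ -
            ((α * (1 - α) * (lam / 2) *
              (∫⁻ q, ENNReal.ofReal (‖q.2.1 - q.2.2‖ ^ 2) ∂pl).toReal : ℝ) : EReal)

/-- The `W₂`-closure (within `P_{μ₀}`) of a set of measures. -/
def W2Closure {d : ℕ} (μ₀ : Measure (Euc d)) (S : Set (Measure (Euc d))) :
    Set (Measure (Euc d)) :=
  {μ ∈ Pfin μ₀ | ∃ s : ℕ → Measure (Euc d), (∀ n, s n ∈ S) ∧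
    Tendsto (fun n => W2 (s n) μ) atTop (nhds 0)}

/-- The Moreau–Yosida regularization `E_τ`. -/
noncomputable def MY {d : ℕ} (μ₀ : Measure (Euc d)) (F : Measure (Euc d) → EReal)
    (τ : ℝ) (μ : Measure (Euc d)) : EReal :=
  ⨅ ν ∈ Pfin μ₀, (((W2 μ ν) ^ 2 / (2 * τ) : ℝ) : EReal) + F ν

/-- `ν` is a proximal point of `μ` for `E` with step `τ`: it minimizes
`ρ ↦ W₂²(μ,ρ)/(2τ) + E(ρ)` over `P_{μ₀}`. -/
def IsProximal {d : ℕ} (μ₀ : Measure (Euc d)) (F : Measure (Euc d) → EReal)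
    (τ : ℝ) (μ ν : Measure (Euc d)) : Prop :=
  ν ∈ Pfin μ₀ ∧ ∀ ρ ∈ Pfin μ₀,
    (((W2 μ ν) ^ 2 / (2 * τ) : ℝ) : EReal) + F ν ≤
      (((W2 μ ρ) ^ 2 / (2 * τ) : ℝ) : EReal) + F ρ

/-- The positive part of an extended real, as an element of `[0,∞]`. -/
noncomputable def ERealPos (x : EReal) : ℝ≥0∞ :=
  if x = ⊤ then ⊤ else ENNReal.ofReal x.toReal

/-- The filter of `W₂`-punctured neighborhoods of `μ` within `P_{μ₀}`. -/
def W2nhdsWithin {d : ℕ} (μ₀ μ : Measure (Euc d)) : Filter (Measure (Euc d)) :=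
  ⨅ ε ∈ Set.Ioi (0:ℝ), Filter.principal {ν | ν ∈ Pfin μ₀ ∧ ν ≠ μ ∧ W2 μ ν < ε}

/-- The metric slope `|∇_W F|(μ) = limsup_{ν → μ} (F(μ)-F(ν))⁺ / W₂(μ,ν)`,
valued in `[0,∞]`. -/
noncomputable def slopeW {d : ℕ} (μ₀ : Measure (Euc d)) (F : Measure (Euc d) → EReal)
    (μ : Measure (Euc d)) : ℝ≥0∞ :=
  Filter.limsup (fun ν => ERealPos (F μ - F ν) / ENNReal.ofReal (W2 μ ν))
    (W2nhdsWithin μ₀ μ)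

/-- `Λ_τ(μ,ν) = W₂²(μ,ν) + (τ²/2)|∇_W E|(μ)² + (τ²/2)|∇_W E|(ν)²`, valued in `[0,∞]`. -/
noncomputable def LamT {d : ℕ} (μ₀ : Measure (Euc d)) (F : Measure (Euc d) → EReal)
    (τ : ℝ) (μ ν : Measure (Euc d)) : ℝ≥0∞ :=
  W2sq μ ν + ENNReal.ofReal (τ ^ 2 / 2) * (slopeW μ₀ F μ) ^ 2
    + ENNReal.ofReal (τ ^ 2 / 2) * (slopeW μ₀ F ν) ^ 2

/-! ### The Wasserstein distance -/

/-- Any pair of random variables with laws `μ, ν` on a common space bounds `W₂²` from above. -/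
lemma W2sq_le_of_map {d : ℕ} {Ω : Type*} [MeasurableSpace Ω] {P : Measure Ω} {f g : Ω → Euc d}
    (hf : Measurable f) (hg : Measurable g) {μ ν : Measure (Euc d)} (h1 : P.map f = μ)
    (h2 : P.map g = ν) :
    W2sq μ ν ≤ ∫⁻ q, ENNReal.ofReal (‖f q - g q‖ ^ 2) ∂P := by
  have hm : Measurable (fun q => (f q, g q)) := hf.prodMk hg
  have e1 : (P.map (fun q => (f q, g q))).map Prod.fst = μ := by
    rw [Measure.map_map measurable_fst hm]; exact h1
  have e2 : (P.map (fun q => (f q, g q))).map Prod.snd = ν := by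
    rw [Measure.map_map measurable_snd hm]; exact h2
  refine (iInf₂_le (P.map (fun q => (f q, g q))) ⟨e1, e2⟩).trans ?_
  rw [lintegral_map (by fun_prop) hm]

/-- Gluing of couplings: any coupling of `μ, ν` and any coupling of `ν, ρ` can be composed
along the disintegration of the second one, and Minkowski's inequality bounds the cost. -/
lemma coupling_triangle {d : ℕ} {γ η : Measure (Euc d × Euc d)} [IsProbabilityMeasure γ]
    [IsProbabilityMeasure η] (h : γ.map Prod.snd = η.map Prod.fst) :
    (W2sq (γ.map Prod.fst) (η.map Prod.snd)) ^ ((1 : ℝ)/2) ≤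
      (∫⁻ q, ENNReal.ofReal (‖q.1 - q.2‖ ^ 2) ∂γ) ^ ((1 : ℝ)/2)
        + (∫⁻ q, ENNReal.ofReal (‖q.1 - q.2‖ ^ 2) ∂η) ^ ((1 : ℝ)/2) := by
  let κ : ProbabilityTheory.Kernel (Euc d × Euc d) (Euc d) :=
    η.condKernel.comap Prod.snd measurable_snd
  let P : Measure ((Euc d × Euc d) × Euc d) := γ.compProd κ
  have hP1 : P.map Prod.fst = γ := Measure.fst_compProd γ κ
  have hP2 : P.map (fun q => (q.1.2, q.2)) = η := by
    conv_rhs => rw [← η.disintegrate η.condKernel]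
    ext s hs
    have hm : Measurable (fun q : (Euc d × Euc d) × Euc d => (q.1.2, q.2)) := by fun_prop
    rw [Measure.map_apply hm hs, Measure.compProd_apply (hm hs), Measure.compProd_apply hs,
      Measure.fst, ← h, lintegral_map _ measurable_snd]
    · rfl
    · exact ProbabilityTheory.Kernel.measurable_kernel_prodMk_left hs
  have hle : W2sq (γ.map Prod.fst) (η.map Prod.snd) ≤
      ∫⁻ q, ENNReal.ofReal (‖q.1.1 - q.2‖ ^ 2) ∂P := by
    refine W2sq_le_of_map (by fun_prop) (by fun_prop) ?_ ?_
    · rw [← hP1, Measure.map_map measurable_fst measurable_fst]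
      rfl
    · rw [← hP2, Measure.map_map measurable_snd (by fun_prop)]
      rfl
  have hpow : ∀ x : Euc d, ENNReal.ofReal (‖x‖ ^ 2) = (ENNReal.ofReal ‖x‖) ^ (2 : ℝ) := by
    intro x
    rw [ENNReal.ofReal_rpow_of_nonneg (norm_nonneg _) (by norm_num)]
    norm_num
  have hγ : ∫⁻ q, ENNReal.ofReal (‖q.1 - q.2‖ ^ 2) ∂γ =
      ∫⁻ q, (ENNReal.ofReal ‖q.1.1 - q.1.2‖) ^ (2 : ℝ) ∂P := by
    conv_lhs => rw [← hP1]
    rw [lintegral_map (by fun_prop) measurable_fst]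
    simp only [hpow]
  have hη : ∫⁻ q, ENNReal.ofReal (‖q.1 - q.2‖ ^ 2) ∂η =
      ∫⁻ q, (ENNReal.ofReal ‖q.1.2 - q.2‖) ^ (2 : ℝ) ∂P := by
    conv_lhs => rw [← hP2]
    rw [lintegral_map (by fun_prop) (by fun_prop)]
    simp only [hpow]
  rw [hγ, hη]
  have hmink := ENNReal.lintegral_Lp_add_le (μ := P) (p := 2)
    (f := fun q => ENNReal.ofReal ‖q.1.1 - q.1.2‖) (g := fun q => ENNReal.ofReal ‖q.1.2 - q.2‖)
    (by fun_prop) (by fun_prop) (by norm_num)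
  refine le_trans ?_ hmink
  refine ENNReal.rpow_le_rpow (hle.trans (lintegral_mono fun q => ?_)) (by norm_num)
  rw [hpow]
  refine ENNReal.rpow_le_rpow ?_ (by norm_num)
  rw [Pi.add_apply, ← ENNReal.ofReal_add (norm_nonneg _) (norm_nonneg _)]
  exact ENNReal.ofReal_le_ofReal (by
    simpa using norm_sub_le_norm_sub_add_norm_sub q.1.1 q.1.2 q.2)

lemma W2sq_comm {d : ℕ} (μ ν : Measure (Euc d)) : W2sq μ ν = W2sq ν μ := by
  have key : ∀ μ ν : Measure (Euc d), W2sq μ ν ≤ W2sq ν μ := by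
    intro μ ν
    refine le_iInf₂ fun γ hγ => ?_
    simpa only [norm_sub_rev] using W2sq_le_of_map measurable_snd measurable_fst hγ.2 hγ.1
  exact le_antisymm (key μ ν) (key ν μ)

lemma W2_comm {d : ℕ} (μ ν : Measure (Euc d)) : W2 μ ν = W2 ν μ := by
  rw [W2, W2, W2sq_comm]

lemma W2sq_self {d : ℕ} (μ : Measure (Euc d)) : W2sq μ μ = 0 := by
  have h := W2sq_le_of_map measurable_id measurable_id (Measure.map_id (μ := μ))
    (Measure.map_id (μ := μ))
  simpa using h

lemma W2_nonneg {d : ℕ} (μ ν : Measure (Euc d)) : 0 ≤ W2 μ ν := Real.sqrt_nonneg _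

lemma W2_self {d : ℕ} (μ : Measure (Euc d)) : W2 μ μ = 0 := by
  rw [W2, W2sq_self]; simp

lemma W2_sq {d : ℕ} (μ ν : Measure (Euc d)) : W2 μ ν ^ 2 = (W2sq μ ν).toReal :=
  Real.sq_sqrt ENNReal.toReal_nonneg

lemma isProb_of_map {α β : Type*} [MeasurableSpace α] [MeasurableSpace β] {γ : Measure α}
    {f : α → β} (hf : Measurable f) (h : IsProbabilityMeasure (γ.map f)) :
    IsProbabilityMeasure γ := by
  constructor
  have := h.measure_univ
  rwa [Measure.map_apply hf MeasurableSet.univ] at this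

lemma W2sq_ne_top_trans {d : ℕ} {μ ν ρ : Measure (Euc d)} [IsProbabilityMeasure μ]
    [IsProbabilityMeasure ρ] (h1 : W2sq μ ν ≠ ⊤) (h2 : W2sq ν ρ ≠ ⊤) : W2sq μ ρ ≠ ⊤ := by
  obtain ⟨γ, hγ⟩ := iInf_lt_iff.1 (lt_top_iff_ne_top.2 h1)
  obtain ⟨⟨hγ1, hγ2⟩, hγ⟩ := iInf_lt_iff.1 hγ
  obtain ⟨η, hη⟩ := iInf_lt_iff.1 (lt_top_iff_ne_top.2 h2)
  obtain ⟨⟨hη1, hη2⟩, hη⟩ := iInf_lt_iff.1 hη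
  have : IsProbabilityMeasure γ := isProb_of_map measurable_fst (hγ1 ▸ inferInstance)
  have : IsProbabilityMeasure η := isProb_of_map measurable_snd (hη2 ▸ inferInstance)
  have h := coupling_triangle (γ := γ) (η := η) (hγ2.trans hη1.symm)
  rw [hγ1, hη2] at h
  intro htop
  rw [htop, ENNReal.top_rpow_of_pos (by norm_num), top_le_iff, ENNReal.add_eq_top] at h
  rcases h with h | h
  · exact ENNReal.rpow_ne_top_of_nonneg (by norm_num) hγ.ne h
  · exact ENNReal.rpow_ne_top_of_nonneg (by norm_num) hη.ne h

lemma W2sq_ne_top {d : ℕ} {μ₀ μ ν : Measure (Euc d)} (hμ : μ ∈ Pfin μ₀) (hν : ν ∈ Pfin μ₀) :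
    W2sq μ ν ≠ ⊤ := by
  have := hμ.1
  have := hν.1
  exact W2sq_ne_top_trans (by rw [W2sq_comm]; exact hμ.2) hν.2

/-- The 3-plans provided by convexity along generalized geodesics have optimal marginals, so
optimal plans exist without any compactness argument. -/
lemma exists_optimal {d : ℕ} {μ₀ μ ν : Measure (Euc d)} {lam : ℝ} {F : Measure (Euc d) → EReal}
    (hconv : GenGeoConvex μ₀ lam F) (hμ : μ ∈ Pfin μ₀) (hν : ν ∈ Pfin μ₀) :
    ∃ γ, IsOptimalPlan μ ν γ := by
  obtain ⟨pl, h, -⟩ := hconv μ hμ ν hν ν hν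
  exact ⟨_, h⟩

lemma W2_triangle {d : ℕ} {μ₀ μ ν ρ : Measure (Euc d)} {lam : ℝ} {F : Measure (Euc d) → EReal}
    (hconv : GenGeoConvex μ₀ lam F) (hμ : μ ∈ Pfin μ₀) (hν : ν ∈ Pfin μ₀) (hρ : ρ ∈ Pfin μ₀) :
    W2 μ ρ ≤ W2 μ ν + W2 ν ρ := by
  obtain ⟨γ, hγ1, hγ2, hγ⟩ := exists_optimal hconv hμ hν
  obtain ⟨η, hη1, hη2, hη⟩ := exists_optimal hconv hν hρ
  have : IsProbabilityMeasure γ := isProb_of_map measurable_fst (hγ1 ▸ hμ.1)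
  have : IsProbabilityMeasure η := isProb_of_map measurable_fst (hη1 ▸ hν.1)
  have h := coupling_triangle (γ := γ) (η := η) (hγ2.trans hη1.symm)
  rw [hγ1, hη2, hγ, hη] at h
  have h12 := ENNReal.rpow_ne_top_of_nonneg (y := (1 : ℝ)/2) (by norm_num) (W2sq_ne_top hμ hν)
  have h23 := ENNReal.rpow_ne_top_of_nonneg (y := (1 : ℝ)/2) (by norm_num) (W2sq_ne_top hν hρ)
  have h' := ENNReal.toReal_mono (ENNReal.add_ne_top.2 ⟨h12, h23⟩) h
  rw [ENNReal.toReal_add h12 h23, ← ENNReal.toReal_rpow, ← ENNReal.toReal_rpow,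
    ← ENNReal.toReal_rpow] at h'
  simpa only [W2, Real.sqrt_eq_rpow] using h'

/-! ### Interpolation along generalized geodesics -/

lemma coe_toReal_dom {d : ℕ} {μ₀ μ : Measure (Euc d)} {F : Measure (Euc d) → EReal}
    (hpos : ∀ ρ, (0 : EReal) ≤ F ρ) (hμ : μ ∈ Dom μ₀ F) : (((F μ).toReal : ℝ) : EReal) = F μ :=
  EReal.coe_toReal hμ.2 (fun h => by have := hpos μ; rw [h] at this; simp at this)

lemma norm_interp {d : ℕ} (x y z : Euc d) (α : ℝ) :
    ‖x - ((1 - α) • y + α • z)‖ ^ 2 + α * (1 - α) * ‖y - z‖ ^ 2 =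
      (1 - α) * ‖x - y‖ ^ 2 + α * ‖x - z‖ ^ 2 := by
  have e1 : x - ((1 - α) • y + α • z) = (1 - α) • (x - y) + α • (x - z) := by module
  have e2 : y - z = (x - z) - (x - y) := by module
  rw [e1, e2, norm_add_sq_real, norm_sub_sq_real, norm_smul, norm_smul, mul_pow, mul_pow,
    real_inner_smul_left, real_inner_smul_right, Real.norm_eq_abs, Real.norm_eq_abs, sq_abs,
    sq_abs, real_inner_comm (x - y) (x - z)]
  ring

/-- The squared distance to the base point of a generalized geodesic is `2`-convex, and `F` is
`λ`-convex, where the cost `∫|x₂-x₃|²` of the plan has been replaced by the smaller quantity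
`W₂²(μ₂, μ₃)`. -/
lemma interp {d : ℕ} {μ₀ μ₁ μ₂ μ₃ : Measure (Euc d)} {lam : ℝ} {F : Measure (Euc d) → EReal}
    (hlam : 0 < lam) (hconv : GenGeoConvex μ₀ lam F) (hpos : ∀ ρ, (0 : EReal) ≤ F ρ)
    (h1 : μ₁ ∈ Pfin μ₀) (h2 : μ₂ ∈ Dom μ₀ F) (h3 : μ₃ ∈ Dom μ₀ F)
    {α : ℝ} (hα0 : 0 ≤ α) (hα1 : α ≤ 1) :
    ∃ ρ ∈ Dom μ₀ F,
      W2 μ₁ ρ ^ 2 ≤ (1 - α) * W2 μ₁ μ₂ ^ 2 + α * W2 μ₁ μ₃ ^ 2 - α * (1 - α) * W2 μ₂ μ₃ ^ 2 ∧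
      (F ρ).toReal ≤ (1 - α) * (F μ₂).toReal + α * (F μ₃).toReal
        - α * (1 - α) * (lam / 2) * W2 μ₂ μ₃ ^ 2 := by
  obtain ⟨pl, ⟨ha1, ha2, ha⟩, ⟨hb1, hb2, hb⟩, hF⟩ := hconv μ₁ h1 μ₂ h2.1 μ₃ h3.1
  have hFα := hF α ⟨hα0, hα1⟩
  have m12 : Measurable (fun q : Euc d × Euc d × Euc d => (q.1, q.2.1)) := by fun_prop
  have m13 : Measurable (fun q : Euc d × Euc d × Euc d => (q.1, q.2.2)) := by fun_prop
  have mi : Measurable (fun q : Euc d × Euc d × Euc d => (1 - α) • q.2.1 + α • q.2.2) := by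
    fun_prop
  rw [lintegral_map (by fun_prop) m12] at ha
  rw [lintegral_map (by fun_prop) m13] at hb
  rw [Measure.map_map measurable_fst m12] at ha1
  rw [Measure.map_map measurable_snd m12] at ha2
  rw [Measure.map_map measurable_snd m13] at hb2
  have hpl : IsProbabilityMeasure pl := isProb_of_map (by fun_prop) (ha1 ▸ h1.1)
  set C := ∫⁻ q, ENNReal.ofReal (‖q.2.1 - q.2.2‖ ^ 2) ∂pl with hC
  set D := ∫⁻ q, ENNReal.ofReal (‖q.1 - ((1 - α) • q.2.1 + α • q.2.2)‖ ^ 2) ∂pl with hD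
  set ρ := pl.map (fun q => (1 - α) • q.2.1 + α • q.2.2) with hρ
  have hA : W2sq μ₁ μ₂ ≠ ⊤ := W2sq_ne_top h1 h2.1
  have hB : W2sq μ₁ μ₃ ≠ ⊤ := W2sq_ne_top h1 h3.1
  have hCW : W2sq μ₂ μ₃ ≤ C := W2sq_le_of_map (by fun_prop) (by fun_prop) ha2 hb2
  have hDW : W2sq μ₁ ρ ≤ D := W2sq_le_of_map (by fun_prop) mi ha1 rfl
  have key : D + ENNReal.ofReal (α * (1 - α)) * C =
      ENNReal.ofReal (1 - α) * W2sq μ₁ μ₂ + ENNReal.ofReal α * W2sq μ₁ μ₃ := by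
    rw [← ha, ← hb, hC, hD, ← lintegral_const_mul _ (by fun_prop),
      ← lintegral_const_mul _ (by fun_prop), ← lintegral_const_mul _ (by fun_prop),
      ← lintegral_add_left (by fun_prop), ← lintegral_add_left (by fun_prop)]
    refine lintegral_congr fun q => ?_
    have hα1' : 0 ≤ 1 - α := by linarith
    rw [← ENNReal.ofReal_mul (by positivity), ← ENNReal.ofReal_mul (by positivity),
      ← ENNReal.ofReal_mul (by positivity), ← ENNReal.ofReal_add (by positivity) (by positivity),
      ← ENNReal.ofReal_add (by positivity) (by positivity), norm_interp]
  have hR : ENNReal.ofReal (1 - α) * W2sq μ₁ μ₂ + ENNReal.ofReal α * W2sq μ₁ μ₃ ≠ ⊤ := by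
    finiteness
  have hDt : D ≠ ⊤ := fun h => hR (by rw [← key, h]; simp)
  have hCt : C ≠ ⊤ := by
    have hle : C ≤ 2 * W2sq μ₁ μ₂ + 2 * W2sq μ₁ μ₃ := by
      rw [← ha, ← hb, hC, ← lintegral_const_mul _ (by fun_prop),
        ← lintegral_const_mul _ (by fun_prop), ← lintegral_add_left (by fun_prop)]
      refine lintegral_mono fun q => ?_
      have e2 : ∀ x : ℝ≥0∞, 2 * x = ENNReal.ofReal 2 * x := by simp
      rw [e2, e2, ← ENNReal.ofReal_mul (by positivity), ← ENNReal.ofReal_mul (by positivity),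
        ← ENNReal.ofReal_add (by positivity) (by positivity)]
      refine ENNReal.ofReal_le_ofReal ?_
      -- the midpoint identity bounds `‖y - z‖²` by `2‖x - y‖² + 2‖x - z‖²`
      have := norm_interp q.1 q.2.1 q.2.2 (1/2)
      have := sq_nonneg ‖q.1 - ((1 - (1/2 : ℝ)) • q.2.1 + (1/2 : ℝ) • q.2.2)‖
      dsimp only
      nlinarith
    exact ne_top_of_le_ne_top (by finiteness) hle
  have hCr : W2 μ₂ μ₃ ^ 2 ≤ C.toReal := by rw [W2_sq]; exact ENNReal.toReal_mono hCt hCW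
  have hDr : W2 μ₁ ρ ^ 2 ≤ D.toReal := by rw [W2_sq]; exact ENNReal.toReal_mono hDt hDW
  have hα' : 0 ≤ α * (1 - α) := mul_nonneg hα0 (by linarith)
  have keyr : D.toReal + α * (1 - α) * C.toReal =
      (1 - α) * W2 μ₁ μ₂ ^ 2 + α * W2 μ₁ μ₃ ^ 2 := by
    have := congrArg ENNReal.toReal key
    rw [ENNReal.toReal_add hDt (by finiteness), ENNReal.toReal_add (by finiteness) (by finiteness),
      ENNReal.toReal_mul, ENNReal.toReal_mul, ENNReal.toReal_mul, ENNReal.toReal_ofReal hα',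
      ENNReal.toReal_ofReal (by linarith), ENNReal.toReal_ofReal hα0] at this
    rw [W2_sq, W2_sq, this]
  have hρP : IsProbabilityMeasure ρ := Measure.isProbabilityMeasure_map mi.aemeasurable
  have hρF : ρ ∈ Pfin μ₀ := by
    refine ⟨hρP, ?_⟩
    have hbase : IsProbabilityMeasure μ₀ := by
      obtain ⟨γ, hγ⟩ := iInf_lt_iff.1 (lt_top_iff_ne_top.2 h1.2)
      obtain ⟨⟨hγ1, hγ2⟩, -⟩ := iInf_lt_iff.1 hγ
      have : IsProbabilityMeasure γ := isProb_of_map measurable_snd (hγ2 ▸ h1.1)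
      exact hγ1 ▸ Measure.isProbabilityMeasure_map measurable_fst.aemeasurable
    exact W2sq_ne_top_trans h1.2 (ne_top_of_le_ne_top hDt hDW)
  rw [← coe_toReal_dom hpos h2, ← coe_toReal_dom hpos h3, ← EReal.coe_mul, ← EReal.coe_mul,
    ← EReal.coe_add, ← EReal.coe_sub] at hFα
  have hρD : ρ ∈ Dom μ₀ F := ⟨hρF, fun h => EReal.coe_ne_top _ (top_le_iff.1 (h ▸ hFα))⟩
  rw [← coe_toReal_dom hpos hρD, EReal.coe_le_coe_iff] at hFα
  refine ⟨ρ, hρD, ?_, ?_⟩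
  · nlinarith [mul_le_mul_of_nonneg_left hCr hα']
  · have : 0 ≤ α * (1 - α) * (lam / 2) := by positivity
    nlinarith [mul_le_mul_of_nonneg_left hCr this]

/-! ### Evolution variational inequality and the metric slope -/

lemma proximal_mem_dom {d : ℕ} {μ₀ μ μ' : Measure (Euc d)} {F : Measure (Euc d) → EReal} {τ : ℝ}
    (hpos : ∀ ρ, (0 : EReal) ≤ F ρ) (hμ : μ ∈ Dom μ₀ F) (h : IsProximal μ₀ F τ μ μ') :
    μ' ∈ Dom μ₀ F := by
  refine ⟨h.1, fun htop => ?_⟩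
  have := h.2 μ hμ.1
  rw [htop, ← coe_toReal_dom hpos hμ, EReal.coe_add_top, ← EReal.coe_add] at this
  exact EReal.coe_ne_top _ (top_le_iff.1 this)

lemma proximal_real {d : ℕ} {μ₀ μ μ' σ : Measure (Euc d)} {F : Measure (Euc d) → EReal} {τ : ℝ}
    (hpos : ∀ ρ, (0 : EReal) ≤ F ρ) (hμ : μ ∈ Dom μ₀ F) (h : IsProximal μ₀ F τ μ μ')
    (hσ : σ ∈ Dom μ₀ F) :
    W2 μ μ' ^ 2 / (2 * τ) + (F μ').toReal ≤ W2 μ σ ^ 2 / (2 * τ) + (F σ).toReal := by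
  have := h.2 σ hσ.1
  rwa [← coe_toReal_dom hpos hσ, ← coe_toReal_dom hpos (proximal_mem_dom hpos hμ h),
    ← EReal.coe_add, ← EReal.coe_add, EReal.coe_le_coe_iff] at this

lemma le_of_forall_le_add_mul {x y K : ℝ} (h : ∀ α : ℝ, 0 < α → α ≤ 1 → x ≤ y + α * K) :
    x ≤ y := by
  by_contra! hxy
  have hK : 0 < K := by nlinarith [h 1 one_pos le_rfl]
  have hpos : 0 < min 1 ((x - y) / (2 * K)) := lt_min one_pos (div_pos (by linarith) (by linarith))
  have h1 := h _ hpos (min_le_left _ _)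
  have h2 : min 1 ((x - y) / (2 * K)) * K ≤ (x - y) / (2 * K) * K :=
    mul_le_mul_of_nonneg_right (min_le_right _ _) hK.le
  have h3 : (x - y) / (2 * K) * K = (x - y) / 2 := by field_simp
  linarith

/-- The discrete evolution variational inequality: compare the proximal point `μ'` with points
of the generalized geodesic from `μ'` to `σ` based at `μ`, and differentiate at `α = 0`. -/
lemma evi {d : ℕ} {μ₀ μ μ' σ : Measure (Euc d)} {lam τ : ℝ} {F : Measure (Euc d) → EReal}
    (hlam : 0 < lam) (hτ : 0 < τ) (hconv : GenGeoConvex μ₀ lam F)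
    (hpos : ∀ ρ, (0 : EReal) ≤ F ρ)
    (hμ : μ ∈ Dom μ₀ F) (h : IsProximal μ₀ F τ μ μ') (hσ : σ ∈ Dom μ₀ F) :
    (1 + lam * τ) * W2 μ' σ ^ 2 + W2 μ μ' ^ 2 + 2 * τ * (F μ').toReal ≤
      W2 μ σ ^ 2 + 2 * τ * (F σ).toReal := by
  refine le_of_forall_le_add_mul (K := (1 + lam * τ) * W2 μ' σ ^ 2) fun α hα0 hα1 => ?_
  obtain ⟨ρ, hρ, hW, hf⟩ := interp hlam hconv hpos hμ.1 (proximal_mem_dom hpos hμ h) hσ hα0.le hα1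
  have hp := proximal_real hpos hμ h hρ
  have hp' : W2 μ μ' ^ 2 + 2 * τ * (F μ').toReal ≤ W2 μ ρ ^ 2 + 2 * τ * (F ρ).toReal := by
    have := mul_le_mul_of_nonneg_left hp (by positivity : 0 ≤ 2 * τ)
    have e : ∀ x y : ℝ, 2 * τ * (x / (2 * τ) + y) = x + 2 * τ * y := by
      intro x y; field_simp
    rwa [e, e] at this
  have hf' := mul_le_mul_of_nonneg_left hf (by positivity : 0 ≤ 2 * τ)
  have : α * ((1 + lam * τ) * W2 μ' σ ^ 2 + W2 μ μ' ^ 2 + 2 * τ * (F μ').toReal) ≤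
      α * (W2 μ σ ^ 2 + 2 * τ * (F σ).toReal + α * ((1 + lam * τ) * W2 μ' σ ^ 2)) := by
    linarith
  exact le_of_mul_le_mul_left this hα0

lemma W2nhdsWithin_hasBasis {d : ℕ} (μ₀ μ : Measure (Euc d)) :
    (W2nhdsWithin μ₀ μ).HasBasis (fun ε : ℝ => ε ∈ Set.Ioi (0 : ℝ))
      (fun ε => {ν | ν ∈ Pfin μ₀ ∧ ν ≠ μ ∧ W2 μ ν < ε}) := by
  refine Filter.hasBasis_biInf_principal ?_ ⟨1, by simp⟩
  intro a ha b hb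
  refine ⟨min a b, Set.mem_Ioi.2 (lt_min ha hb), ?_, ?_⟩
  · exact fun ν hν => ⟨hν.1, hν.2.1, hν.2.2.trans_le (min_le_left _ _)⟩
  · exact fun ν hν => ⟨hν.1, hν.2.1, hν.2.2.trans_le (min_le_right _ _)⟩

lemma ERealPos_coe (x : ℝ) : ERealPos (x : EReal) = ENNReal.ofReal x := by
  simp [ERealPos]

/-- For a `λ`-convex functional the metric slope controls the decrease of `F` globally. -/
lemma slope_global {d : ℕ} {μ₀ μ σ : Measure (Euc d)} {lam : ℝ} {F : Measure (Euc d) → EReal}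
    (hlam : 0 < lam) (hconv : GenGeoConvex μ₀ lam F) (hpos : ∀ ρ, (0 : EReal) ≤ F ρ)
    (hμ : μ ∈ Dom μ₀ F) (hσ : σ ∈ Dom μ₀ F) (hs : slopeW μ₀ F μ ≠ ⊤) :
    (F μ).toReal - (F σ).toReal + lam / 2 * W2 μ σ ^ 2 ≤ (slopeW μ₀ F μ).toReal * W2 μ σ := by
  by_contra! hcon
  set s := (slopeW μ₀ F μ).toReal with hsdef
  set W := W2 μ σ with hWdef
  have hW0 : 0 ≤ W := W2_nonneg _ _
  have hs0 : 0 ≤ s := ENNReal.toReal_nonneg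
  set g := (F μ).toReal - (F σ).toReal + lam / 2 * W ^ 2 with hg
  -- a slope `s' > s` for which the strict inequality still holds
  obtain ⟨s', hss', hs'⟩ : ∃ s', s < s' ∧ s' * W < g := by
    refine ⟨s + (g - s * W) / (2 * (W + 1)), ?_, ?_⟩
    · have : 0 < (g - s * W) / (2 * (W + 1)) := div_pos (by linarith) (by linarith)
      linarith
    · have h1 : (g - s * W) / (2 * (W + 1)) * W ≤ (g - s * W) / (2 * (W + 1)) * (W + 1) := by
        refine mul_le_mul_of_nonneg_left (by linarith) (div_nonneg (by linarith) (by linarith))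
      have h2 : (g - s * W) / (2 * (W + 1)) * (W + 1) = (g - s * W) / 2 := by field_simp
      linarith
  have hfreq : ∃ᶠ ρ in W2nhdsWithin μ₀ μ,
      ENNReal.ofReal s' ≤ ERealPos (F μ - F ρ) / ENNReal.ofReal (W2 μ ρ) := by
    rw [(W2nhdsWithin_hasBasis μ₀ μ).frequently_iff]
    intro ε hε
    rw [Set.mem_Ioi] at hε
    set L := lam / 2 * W ^ 2 with hL
    have hL0 : 0 ≤ L := by positivity
    obtain ⟨α, hα0, hα1, hαε, hαg⟩ : ∃ α : ℝ, 0 < α ∧ α ≤ 1 ∧ α * W < ε ∧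
        s' * W + α * L < g := by
      have t : Tendsto (fun α : ℝ => α * W) (nhdsWithin 0 (Set.Ioi 0)) (nhds 0) := by
        have : Tendsto (fun α : ℝ => α * W) (nhds 0) (nhds (0 * W)) :=
          (continuous_id.mul continuous_const).tendsto 0
        rw [zero_mul] at this
        exact this.mono_left nhdsWithin_le_nhds
      have t2 : Tendsto (fun α : ℝ => s' * W + α * L) (nhdsWithin 0 (Set.Ioi 0))
          (nhds (s' * W)) := by
        have : Tendsto (fun α : ℝ => s' * W + α * L) (nhds 0) (nhds (s' * W + 0 * L)) :=
          (continuous_const.add (continuous_id.mul continuous_const)).tendsto 0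
        rw [zero_mul, add_zero] at this
        exact this.mono_left nhdsWithin_le_nhds
      have t3 : ∀ᶠ α : ℝ in nhdsWithin 0 (Set.Ioi 0), α < 1 :=
        nhdsWithin_le_nhds (gt_mem_nhds one_pos)
      obtain ⟨α, ⟨h1, h2⟩, h3, h4⟩ := ((((tendsto_order.1 t).2 ε hε).and
        ((tendsto_order.1 t2).2 g hs')).and (t3.and self_mem_nhdsWithin)).exists
      exact ⟨α, h4, h3.le, h1, h2⟩
    obtain ⟨ρ, hρ, hρW, hρf⟩ := interp hlam hconv hpos hμ.1 hμ hσ hα0.le hα1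
    rw [W2_self] at hρW
    have hWρ : W2 μ ρ ≤ α * W := by
      refine abs_le_of_sq_le_sq' ?_ (by positivity) |>.2
      calc W2 μ ρ ^ 2 ≤ _ := hρW
        _ = _ := by rw [← hWdef]; ring
    have hdec : α * (s' * W) < (F μ).toReal - (F ρ).toReal := by
      have h5 : α * (s' * W + α * L) < α * g := mul_lt_mul_of_pos_left hαg hα0
      have h6 : α * g - α * (α * L) ≤ (F μ).toReal - (F ρ).toReal := by
        rw [hg, hL]; linarith
      linarith
    have hs'0 : 0 ≤ s' := hs0.trans hss'.le
    have hdec0 : 0 < (F μ).toReal - (F ρ).toReal := lt_of_le_of_lt (by positivity) hdec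
    refine ⟨ρ, ⟨hρ.1, ?_, hWρ.trans_lt hαε⟩, ?_⟩
    · rintro rfl
      simp at hdec0
    · rw [← coe_toReal_dom hpos hμ, ← coe_toReal_dom hpos hρ, ← EReal.coe_sub, ERealPos_coe,
        ENNReal.le_div_iff_mul_le (Or.inr (by simpa using hdec0)) (Or.inl ENNReal.ofReal_ne_top),
        ← ENNReal.ofReal_mul hs'0]
      refine ENNReal.ofReal_le_ofReal ?_
      calc s' * W2 μ ρ ≤ s' * (α * W) := mul_le_mul_of_nonneg_left hWρ hs'0
        _ = α * (s' * W) := by ring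
        _ ≤ _ := hdec.le
  have hlim : ENNReal.ofReal s' ≤ slopeW μ₀ F μ := Filter.le_limsup_of_frequently_le hfreq
  have := ENNReal.toReal_mono hs hlim
  rw [ENNReal.toReal_ofReal (hs0.trans hss'.le)] at this
  linarith

lemma slope_proximal {d : ℕ} {μ₀ μ μ' : Measure (Euc d)} {lam τ : ℝ}
    {F : Measure (Euc d) → EReal} (hτ : 0 < τ) (hconv : GenGeoConvex μ₀ lam F)
    (hpos : ∀ ρ, (0 : EReal) ≤ F ρ) (hμ : μ ∈ Dom μ₀ F) (h : IsProximal μ₀ F τ μ μ') :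
    slopeW μ₀ F μ' ≤ ENNReal.ofReal (W2 μ μ' / τ) := by
  have hμ' := proximal_mem_dom hpos hμ h
  set w := W2 μ μ' with hw
  have hw0 : 0 ≤ w := W2_nonneg _ _
  refine ENNReal.le_of_forall_pos_le_add fun ε hε _ => ?_
  have hε' : (0 : ℝ) < ε := hε
  refine Filter.limsup_le_of_le (h := ?_)
  rw [(W2nhdsWithin_hasBasis μ₀ μ').eventually_iff]
  refine ⟨2 * τ * ε, by rw [Set.mem_Ioi]; positivity, fun ρ hρ => ?_⟩
  by_cases htop : F ρ = ⊤
  · rw [htop, ← coe_toReal_dom hpos hμ', EReal.sub_top]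
    simp [ERealPos]
  have hρD : ρ ∈ Dom μ₀ F := ⟨hρ.1, htop⟩
  set δ := W2 μ' ρ with hδ
  have hδ0 : 0 ≤ δ := W2_nonneg _ _
  rw [← coe_toReal_dom hpos hμ', ← coe_toReal_dom hpos hρD, ← EReal.coe_sub, ERealPos_coe]
  refine ENNReal.div_le_of_le_mul ?_
  have e : (ε : ℝ≥0∞) = ENNReal.ofReal ε := by simp
  rw [e, ← ENNReal.ofReal_add (by positivity) hε'.le, ← ENNReal.ofReal_mul (by positivity)]
  refine ENNReal.ofReal_le_ofReal ?_
  have hp := proximal_real hpos hμ h hρD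
  have htri : W2 μ ρ ^ 2 ≤ (w + δ) ^ 2 :=
    pow_le_pow_left₀ (W2_nonneg _ _) (W2_triangle hconv hμ.1 hμ'.1 hρ.1) 2
  have h1 : W2 μ ρ ^ 2 / (2 * τ) ≤ (w + δ) ^ 2 / (2 * τ) := by gcongr
  have h2 : (w + δ) ^ 2 / (2 * τ) - w ^ 2 / (2 * τ) = (w / τ + δ / (2 * τ)) * δ := by
    field_simp; ring
  have h3 : δ / (2 * τ) ≤ ε := by
    rw [div_le_iff₀ (by positivity)]; linarith [hρ.2.2]
  have h4 : (w / τ + δ / (2 * τ)) * δ ≤ (w / τ + ε) * δ := by gcongr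
  rw [← hw] at hp
  linarith

/-- The proximal step is bounded by the slope at the starting point; this is what makes the
factor `x - a w` in `lam_step` nonnegative. -/
lemma step_le_slope {d : ℕ} {μ₀ μ μ' : Measure (Euc d)} {lam τ : ℝ}
    {F : Measure (Euc d) → EReal} (hlam : 0 < lam) (hτ : 0 < τ) (hconv : GenGeoConvex μ₀ lam F)
    (hpos : ∀ ρ, (0 : EReal) ≤ F ρ) (hμ : μ ∈ Dom μ₀ F) (h : IsProximal μ₀ F τ μ μ')
    (hs : slopeW μ₀ F μ ≠ ⊤) :
    (1 + lam * τ) * W2 μ μ' ≤ τ * (slopeW μ₀ F μ).toReal := by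
  have h1 := evi hlam hτ hconv hpos hμ h hμ
  have h2 := slope_global hlam hconv hpos hμ (proximal_mem_dom hpos hμ h) hs
  rw [W2_self, W2_comm μ' μ] at h1
  have h2' := mul_le_mul_of_nonneg_left h2 (by positivity : 0 ≤ 2 * τ)
  have hw0 : 0 ≤ W2 μ μ' := W2_nonneg _ _
  have hs0 : 0 ≤ (slopeW μ₀ F μ).toReal := ENNReal.toReal_nonneg
  rcases hw0.eq_or_lt with h0 | h0
  · rw [← h0, mul_zero]; positivity
  · refine le_of_mul_le_mul_right ?_ h0
    linarith

/-- One proximal step contracts `Λ_τ` by the exact factor `(1 + λτ)²`. -/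
lemma lam_step {d : ℕ} {μ₀ μ ν μ' ν' : Measure (Euc d)} {lam τ : ℝ}
    {F : Measure (Euc d) → EReal} (hlam : 0 < lam) (hτ : 0 < τ) (hconv : GenGeoConvex μ₀ lam F)
    (hpos : ∀ ρ, (0 : EReal) ≤ F ρ) (hμ : μ ∈ Dom μ₀ F) (hν : ν ∈ Dom μ₀ F)
    (h : IsProximal μ₀ F τ μ μ') (k : IsProximal μ₀ F τ ν ν') :
    ENNReal.ofReal ((1 + lam * τ) ^ 2) * LamT μ₀ F τ μ' ν' ≤ LamT μ₀ F τ μ ν := by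
  have hμ' := proximal_mem_dom hpos hμ h
  have hν' := proximal_mem_dom hpos hν k
  have hc : ENNReal.ofReal (τ ^ 2 / 2) ≠ 0 := by
    rw [Ne, ENNReal.ofReal_eq_zero, not_le]; positivity
  by_cases hs : slopeW μ₀ F μ = ⊤
  · simp [LamT, hs, ENNReal.mul_top hc]
  by_cases ht : slopeW μ₀ F ν = ⊤
  · simp [LamT, ht, ENNReal.mul_top hc]
  have hW : ∀ {α β : Measure (Euc d)}, α ∈ Dom μ₀ F → β ∈ Dom μ₀ F →
      W2sq α β = ENNReal.ofReal (W2 α β ^ 2) := by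
    intro α β hα hβ
    rw [W2_sq, ENNReal.ofReal_toReal (W2sq_ne_top hα.1 hβ.1)]
  have up : LamT μ₀ F τ μ' ν' ≤
      ENNReal.ofReal (W2 μ' ν' ^ 2 + W2 μ μ' ^ 2 / 2 + W2 ν ν' ^ 2 / 2) := by
    have hterm : ∀ {α β : Measure (Euc d)}, α ∈ Dom μ₀ F → IsProximal μ₀ F τ α β →
        ENNReal.ofReal (τ ^ 2 / 2) * slopeW μ₀ F β ^ 2 ≤ ENNReal.ofReal (W2 α β ^ 2 / 2) := by
      intro α β hα hαβ
      have hw0 : 0 ≤ W2 α β / τ := div_nonneg (W2_nonneg _ _) hτ.le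
      calc _ ≤ ENNReal.ofReal (τ ^ 2 / 2) * ENNReal.ofReal (W2 α β / τ) ^ 2 := by
            gcongr; exact slope_proximal hτ hconv hpos hα hαβ
        _ = _ := by
            rw [← ENNReal.ofReal_pow hw0, ← ENNReal.ofReal_mul (by positivity)]
            congr 1; field_simp
    rw [ENNReal.ofReal_add (by positivity) (by positivity),
      ENNReal.ofReal_add (by positivity) (by positivity), LamT, hW hμ' hν']
    gcongr
    · exact hterm hμ h
    · exact hterm hν k
  have low : LamT μ₀ F τ μ ν = ENNReal.ofReal (W2 μ ν ^ 2
      + τ ^ 2 / 2 * (slopeW μ₀ F μ).toReal ^ 2 + τ ^ 2 / 2 * (slopeW μ₀ F ν).toReal ^ 2) := by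
    rw [ENNReal.ofReal_add (by positivity) (by positivity),
      ENNReal.ofReal_add (by positivity) (by positivity), LamT, hW hμ hν,
      ENNReal.ofReal_mul (by positivity), ENNReal.ofReal_mul (by positivity),
      ENNReal.ofReal_pow ENNReal.toReal_nonneg, ENNReal.ofReal_pow ENNReal.toReal_nonneg,
      ENNReal.ofReal_toReal hs, ENNReal.ofReal_toReal ht]
  refine (mul_le_mul_right up _).trans ?_
  rw [low, ← ENNReal.ofReal_mul (by positivity)]
  refine ENNReal.ofReal_le_ofReal ?_
  have e1 := evi hlam hτ hconv hpos hμ h hν'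
  have e2 := evi hlam hτ hconv hpos hν k hμ
  have e3 := evi hlam hτ hconv hpos hν k hμ'
  have e4 := evi hlam hτ hconv hpos hμ h hν
  have g1 := slope_global hlam hconv hpos hμ hμ' hs
  have g2 := slope_global hlam hconv hpos hν hν' ht
  have b1 := step_le_slope hlam hτ hconv hpos hμ h hs
  have b2 := step_le_slope hlam hτ hconv hpos hν k ht
  rw [W2_comm ν' μ, W2_comm ν μ] at e2
  rw [W2_comm ν' μ', W2_comm ν μ'] at e3
  have hs0 : 0 ≤ (slopeW μ₀ F μ).toReal := ENNReal.toReal_nonneg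
  have ht0 : 0 ≤ (slopeW μ₀ F ν).toReal := ENNReal.toReal_nonneg
  have w0 : 0 ≤ W2 μ μ' := W2_nonneg _ _
  have v0 : 0 ≤ W2 ν ν' := W2_nonneg _ _
  generalize W2 μ μ' = w at *
  generalize W2 ν ν' = v at *
  generalize (slopeW μ₀ F μ).toReal = s at *
  generalize (slopeW μ₀ F ν).toReal = t at *
  have ha : 0 < lam * τ := by positivity
  -- with `a = 1 + λτ`, the defect on each side factors as `(τs - a w)(τs - (2 - a) w) / 2`
  have q1 : 0 ≤ (τ * s - (1 + lam * τ) * w) * (τ * s - (1 - lam * τ) * w) :=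
    mul_nonneg (by linarith) (by nlinarith)
  have q2 : 0 ≤ (τ * t - (1 + lam * τ) * v) * (τ * t - (1 - lam * τ) * v) :=
    mul_nonneg (by linarith) (by nlinarith)
  have a0 : 0 ≤ 1 + lam * τ := by linarith
  have e1' := mul_le_mul_of_nonneg_left e1 a0
  have e3' := mul_le_mul_of_nonneg_left e3 a0
  have g1' := mul_le_mul_of_nonneg_left g1 hτ.le
  have g2' := mul_le_mul_of_nonneg_left g2 hτ.le
  linarith

/-! ### The decay estimate -/

/-- **Exponential decay of `Λ_τ` along the discrete gradient flow** (inequality (1.12)).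
For `E` proper, coercive, lower semicontinuous, `λ`-convex along generalized geodesics
with `λ > 0`, nonnegative, `0 < τ` with `λτ ≤ 1`, and `μ, ν ∈ D(E)`, the discrete
gradient flows `μ_n = J_τⁿ μ`, `ν_n = J_τⁿ ν` satisfy
`Λ_τ(μ_n,ν_n)^{1/2} ≤ (1+λτ)^{-n} Λ_τ(μ,ν)^{1/2} + λτ (6(1+λτ)/√(2λ)) √(E(μ)+E(ν))`. -/
theorem discrete_flow_exponential_decay
    {d : ℕ} (μ₀ : Measure (Euc d)) (hμ₀ : IsProbabilityMeasure μ₀)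
    (F : Measure (Euc d) → EReal) (lam : ℝ) (hlam : 0 < lam)
    (hproper : ProperFn μ₀ F) (hcoer : CoerciveFn μ₀ F) (hlsc : W2LSC μ₀ F)
    (hconv : GenGeoConvex μ₀ lam F) (hpos : ∀ ρ, (0 : EReal) ≤ F ρ)
    (τ : ℝ) (hτ : 0 < τ) (hτlam : lam * τ ≤ 1)
    (μ ν : Measure (Euc d)) (hμ : μ ∈ Dom μ₀ F) (hν : ν ∈ Dom μ₀ F)
    (μseq νseq : ℕ → Measure (Euc d)) (hμ0 : μseq 0 = μ) (hν0 : νseq 0 = ν)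
    (hμstep : ∀ n, IsProximal μ₀ F τ (μseq n) (μseq (n + 1)))
    (hνstep : ∀ n, IsProximal μ₀ F τ (νseq n) (νseq (n + 1))) :
    ∀ n : ℕ, (LamT μ₀ F τ (μseq n) (νseq n)) ^ ((1 : ℝ)/2) ≤
      ENNReal.ofReal ((1 + lam * τ) ^ (-(n : ℤ))) * (LamT μ₀ F τ μ ν) ^ ((1 : ℝ)/2)
        + ENNReal.ofReal (lam * τ * (6 * (1 + lam * τ) / Real.sqrt (2 * lam))
            * Real.sqrt ((F μ).toReal + (F ν).toReal)) := by
  intro n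
  have hdom : ∀ n, μseq n ∈ Dom μ₀ F ∧ νseq n ∈ Dom μ₀ F := by
    intro n
    induction n with
    | zero => exact ⟨hμ0 ▸ hμ, hν0 ▸ hν⟩
    | succ n ih =>
      exact ⟨proximal_mem_dom hpos ih.1 (hμstep n), proximal_mem_dom hpos ih.2 (hνstep n)⟩
  have ha : 0 < 1 + lam * τ := by positivity
  have hiter : LamT μ₀ F τ (μseq n) (νseq n) ≤
      (ENNReal.ofReal ((1 + lam * τ) ^ (-(n : ℤ)))) ^ 2 * LamT μ₀ F τ μ ν := by
    induction n with
    | zero => simp [hμ0, hν0]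
    | succ n ih =>
      have hst := lam_step hlam hτ hconv hpos (hdom n).1 (hdom n).2 (hμstep n) (hνstep n)
      have hinv : ENNReal.ofReal (((1 + lam * τ) ^ 2)⁻¹) * ENNReal.ofReal ((1 + lam * τ) ^ 2)
          = 1 := by
        rw [← ENNReal.ofReal_mul (by positivity), inv_mul_cancel₀ (by positivity),
          ENNReal.ofReal_one]
      calc LamT μ₀ F τ (μseq (n + 1)) (νseq (n + 1))
          = ENNReal.ofReal (((1 + lam * τ) ^ 2)⁻¹) * (ENNReal.ofReal ((1 + lam * τ) ^ 2) *
              LamT μ₀ F τ (μseq (n + 1)) (νseq (n + 1))) := by rw [← mul_assoc, hinv, one_mul]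
        _ ≤ ENNReal.ofReal (((1 + lam * τ) ^ 2)⁻¹) *
              ((ENNReal.ofReal ((1 + lam * τ) ^ (-(n : ℤ)))) ^ 2 * LamT μ₀ F τ μ ν) := by
            exact mul_le_mul_right (hst.trans ih) _
        _ = _ := by
            rw [← mul_assoc, ← ENNReal.ofReal_pow (by positivity),
              ← ENNReal.ofReal_pow (by positivity), ← ENNReal.ofReal_mul (by positivity)]
            congr 2
            rw [zpow_neg, zpow_neg, zpow_natCast, zpow_natCast]
            field_simp
            ring
  refine le_trans ?_ le_self_add
  calc (LamT μ₀ F τ (μseq n) (νseq n)) ^ ((1 : ℝ)/2)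
      ≤ ((ENNReal.ofReal ((1 + lam * τ) ^ (-(n : ℤ)))) ^ 2 * LamT μ₀ F τ μ ν) ^ ((1 : ℝ)/2) :=
        ENNReal.rpow_le_rpow hiter (by norm_num)
    _ = _ := by
        rw [ENNReal.mul_rpow_of_nonneg _ _ (by norm_num), ← ENNReal.rpow_natCast,
          ← ENNReal.rpow_mul]
        norm_num
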